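/- Let V be a smooth strictly convex function on an open interval I ⊆ ℝ (so V''(x) > 0 on I), and suppose f_∞(x) = C exp(−V(x)) is a probability density on I for some normalizing constant C > 0; assume V'(x) → −∞-side negativity and positivity conditions, namely lim_{x→i₋} V'(x) < 0 and lim_{x→i₊} V'(x) > 0 where I = (i₋,i₊). Then for every random variable X with density f_∞ and every smooth function φ on I with φ(X) of finite variance, the one-dimensional Brascamp–Lieb inequality holds: Var[φ(X)] ≤ ∫_I (1/V''(x)) (φ'(x))² f_∞(x) dx. -/

import Mathlib

open MeasureTheory Set

/-!
Write `W = V'`, so that `f = C exp (-V)` satisfies `f' = -W f`, and let `G` be a primitive of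
`φ' ^ 2 / W'`. Cauchy–Schwarz, applied to the increments of `φ`, `W` and `G`, gives
`(φ x - φ c) ^ 2 ≤ (W x - W c) * (G x - G c)`. On a compact interval choose `c` so that `G - G c`
has `f`-mean zero: the constant `W c` then drops out of `∫ (W - W c) (G - G c) f`, and integrating
by parts leaves `∫ G' f` minus boundary terms, which are nonnegative because `G` is increasing.
Hence some constant `k` satisfies `∫ (φ - k) ^ 2 f ≤ ∫ (φ' ^ 2 / V'') f`, and the variance on `I` is
reached by exhausting `I` with compact intervals. -/

open Filter

section WeightedVariance

variable {α ι : Type*} [MeasurableSpace α] {μ : Measure α} {f φ : α → ℝ}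

lemma integrable_mul_of_integrable_sq_mul (hf₀ : 0 ≤ f) (hf : Integrable f μ)
    (hφ : AEStronglyMeasurable φ μ) (hφf : Integrable (fun x => φ x ^ 2 * f x) μ) :
    Integrable (fun x => φ x * f x) μ := by
  refine (hf.add hφf).mono' (hφ.mul hf.aestronglyMeasurable) (ae_of_all _ fun x => ?_)
  have hφx : |φ x| ≤ 1 + φ x ^ 2 := by nlinarith [sq_nonneg (|φ x| - 1), sq_abs (φ x)]
  calc ‖φ x * f x‖ = |φ x| * f x := by rw [norm_mul, Real.norm_eq_abs, Real.norm_of_nonneg (hf₀ x)]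
    _ ≤ (1 + φ x ^ 2) * f x := mul_le_mul_of_nonneg_right hφx (hf₀ x)
    _ = f x + φ x ^ 2 * f x := by ring

lemma integrable_sub_const_sq_mul (hf : Integrable f μ) (hφ₁ : Integrable (fun x => φ x * f x) μ)
    (hφ₂ : Integrable (fun x => φ x ^ 2 * f x) μ) (k : ℝ) :
    Integrable (fun x => (φ x - k) ^ 2 * f x) μ :=
  ((hφ₂.sub (hφ₁.const_mul (2 * k))).add (hf.const_mul (k ^ 2))).congr
    (ae_of_all _ fun x => by simp only [Pi.add_apply, Pi.sub_apply]; ring)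

lemma integral_sub_const_sq_mul (hf : Integrable f μ) (hφ₁ : Integrable (fun x => φ x * f x) μ)
    (hφ₂ : Integrable (fun x => φ x ^ 2 * f x) μ) (k : ℝ) :
    ∫ x, (φ x - k) ^ 2 * f x ∂μ =
      ∫ x, φ x ^ 2 * f x ∂μ - 2 * k * ∫ x, φ x * f x ∂μ + k ^ 2 * ∫ x, f x ∂μ := by
  have hφ₁k : Integrable (fun x => 2 * k * (φ x * f x)) μ := hφ₁.const_mul _
  have hφ₂k : Integrable (fun x => φ x ^ 2 * f x - 2 * k * (φ x * f x)) μ := hφ₂.sub hφ₁k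
  rw [← integral_const_mul, ← integral_const_mul, ← integral_sub hφ₂ hφ₁k,
    ← integral_add hφ₂k (hf.const_mul _)]
  congr 1 with x
  ring

lemma integral_mul_integral_sq_sub_sq_le (hf : Integrable f μ)
    (hφ₁ : Integrable (fun x => φ x * f x) μ) (hφ₂ : Integrable (fun x => φ x ^ 2 * f x) μ)
    (k : ℝ) :
    (∫ x, f x ∂μ) * (∫ x, φ x ^ 2 * f x ∂μ) - (∫ x, φ x * f x ∂μ) ^ 2 ≤
      (∫ x, f x ∂μ) * ∫ x, (φ x - k) ^ 2 * f x ∂μ := by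
  rw [integral_sub_const_sq_mul hf hφ₁ hφ₂]
  linarith [sq_nonneg (k * ∫ x, f x ∂μ - ∫ x, φ x * f x ∂μ)]

lemma integral_sub_sq_mul_le {u v : α → ℝ} (hf₀ : 0 ≤ f)
    (hu : Integrable (fun x => u x ^ 2 * f x) μ) (hv : Integrable (fun x => v x ^ 2 * f x) μ) :
    ∫ x, (u x - v x) ^ 2 * f x ∂μ ≤
      2 * (∫ x, u x ^ 2 * f x ∂μ + ∫ x, v x ^ 2 * f x ∂μ) := by
  rw [← integral_add hu hv, ← integral_const_mul]
  refine integral_mono_of_nonneg (ae_of_all _ fun x => mul_nonneg (sq_nonneg _) (hf₀ x))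
    ((hu.add hv).const_mul 2) (ae_of_all _ fun x => ?_)
  calc (u x - v x) ^ 2 * f x ≤ 2 * (u x ^ 2 + v x ^ 2) * f x :=
        mul_le_mul_of_nonneg_right (by linarith [sq_nonneg (u x + v x)]) (hf₀ x)
    _ = 2 * (u x ^ 2 * f x + v x ^ 2 * f x) := by ring

variable {l : Filter ι} [l.NeBot] [l.IsCountablyGenerated] {s : ι → Set α} {R : ℝ}

-- One set `s i` of positive mass already bounds all the later centres `k`.
theorem integrable_sq_mul_of_aecover (hs : AECover μ l s) (hs_mono : ∀ i, ∀ᶠ j in l, s i ⊆ s j)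
    (hf₀ : 0 ≤ f) (hf : Integrable f μ) (hf_pos : 0 < ∫ x, f x ∂μ)
    (hφ : AEStronglyMeasurable φ μ) (hφ₂ : ∀ i, IntegrableOn (fun x => φ x ^ 2 * f x) (s i) μ)
    (hR : ∀ᶠ i in l, ∃ k, ∫ x in s i, (φ x - k) ^ 2 * f x ∂μ ≤ R) :
    Integrable (fun x => φ x ^ 2 * f x) μ := by
  have hsub (i : ι) (k : ℝ) : IntegrableOn (fun x => (φ x - k) ^ 2 * f x) (s i) μ :=
    integrable_sub_const_sq_mul hf.integrableOn
      (integrable_mul_of_integrable_sq_mul hf₀ hf.integrableOn hφ.restrict (hφ₂ i)) (hφ₂ i) k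
  have hnonneg (u : α → ℝ) (ν : Measure α) : 0 ≤ᵐ[ν] fun x => u x ^ 2 * f x :=
    ae_of_all _ fun x => mul_nonneg (sq_nonneg _) (hf₀ x)
  obtain ⟨i, hi⟩ : ∃ i, 0 < ∫ x in s i, f x ∂μ :=
    ((hs.integral_tendsto_of_countably_generated hf).eventually_const_lt hf_pos).exists
  set m := ∫ x in s i, f x ∂μ
  set A := ∫ x in s i, φ x ^ 2 * f x ∂μ
  refine hs.integrable_of_integral_bounded_of_nonneg_ae
    (2 * (R + 2 * (A + R) / m * ∫ x, f x ∂μ)) hφ₂ (hnonneg φ μ) ?_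
  filter_upwards [hR, hs_mono i] with j ⟨k, hk⟩ hij
  have hk_sq : k ^ 2 ≤ 2 * (A + R) / m := by
    rw [le_div_iff₀ hi, ← integral_const_mul]
    calc ∫ x in s i, k ^ 2 * f x ∂μ = ∫ x in s i, (φ x - (φ x - k)) ^ 2 * f x ∂μ := by
          simp only [sub_sub_cancel]
      _ ≤ 2 * (A + ∫ x in s i, (φ x - k) ^ 2 * f x ∂μ) :=
          integral_sub_sq_mul_le hf₀ (hφ₂ i) (hsub i k)
      _ ≤ 2 * (A + ∫ x in s j, (φ x - k) ^ 2 * f x ∂μ) := by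
          linarith [setIntegral_mono_set (hsub j k) (hnonneg _ _) hij.eventuallyLE]
      _ ≤ 2 * (A + R) := by linarith
  have hk_mass : ∫ x in s j, (-k) ^ 2 * f x ∂μ ≤ 2 * (A + R) / m * ∫ x, f x ∂μ := by
    rw [integral_const_mul, neg_sq]
    exact mul_le_mul hk_sq (setIntegral_le_integral hf (ae_of_all _ hf₀)) (integral_nonneg hf₀)
      ((sq_nonneg k).trans hk_sq)
  calc ∫ x in s j, φ x ^ 2 * f x ∂μ = ∫ x in s j, (φ x - k - -k) ^ 2 * f x ∂μ := by
        simp only [sub_neg_eq_add, sub_add_cancel]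
    _ ≤ 2 * (∫ x in s j, (φ x - k) ^ 2 * f x ∂μ + ∫ x in s j, (-k) ^ 2 * f x ∂μ) :=
        integral_sub_sq_mul_le hf₀ (hsub j k) (hf.integrableOn.const_mul _)
    _ ≤ 2 * (R + 2 * (A + R) / m * ∫ x, f x ∂μ) := by linarith

theorem integral_mul_integral_sq_sub_sq_le_of_aecover (hs : AECover μ l s) (hf₀ : 0 ≤ f)
    (hf : Integrable f μ) (hφ : AEStronglyMeasurable φ μ)
    (hφ₂ : Integrable (fun x => φ x ^ 2 * f x) μ)
    (hR : ∀ᶠ i in l, ∃ k, ∫ x in s i, (φ x - k) ^ 2 * f x ∂μ ≤ R) :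
    (∫ x, f x ∂μ) * (∫ x, φ x ^ 2 * f x ∂μ) - (∫ x, φ x * f x ∂μ) ^ 2 ≤ (∫ x, f x ∂μ) * R := by
  have hφ₁ := integrable_mul_of_integrable_sq_mul hf₀ hf hφ hφ₂
  have hlim {g : α → ℝ} (hg : Integrable g μ) := hs.integral_tendsto_of_countably_generated hg
  refine le_of_tendsto_of_tendsto (((hlim hf).mul (hlim hφ₂)).sub ((hlim hφ₁).pow 2))
    ((hlim hf).mul_const R) ?_
  filter_upwards [hR] with i ⟨k, hk⟩
  exact (integral_mul_integral_sq_sub_sq_le hf.integrableOn hφ₁.integrableOn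
    hφ₂.integrableOn k).trans (mul_le_mul_of_nonneg_left hk (integral_nonneg hf₀))

end WeightedVariance

section Interval

variable {a b : ℝ} {φ φ' W w f G G' : ℝ → ℝ}

lemma sq_sub_le_mul_sub_of_hasDerivAt {D : Set ℝ} (hD : Convex ℝ D)
    (hφ : ContinuousOn φ D) (hφ' : ∀ x ∈ interior D, HasDerivAt φ (φ' x) x)
    (hW : ContinuousOn W D) (hW' : ∀ x ∈ interior D, HasDerivAt W (w x) x)
    (hw : ∀ x ∈ interior D, 0 < w x) (hG : ContinuousOn G D)
    (hG' : ∀ x ∈ interior D, HasDerivAt G (1 / w x * φ' x ^ 2) x)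
    {x y : ℝ} (hx : x ∈ D) (hy : y ∈ D) :
    (φ y - φ x) ^ 2 ≤ (W y - W x) * (G y - G x) := by
  wlog hxy : x ≤ y generalizing x y
  · linarith [this hy hx (le_of_not_ge hxy)]
  have hmono (t : ℝ) : MonotoneOn (fun z => t ^ 2 * W z - 2 * t * φ z + G z) D := by
    refine monotoneOn_of_hasDerivWithinAt_nonneg hD
      (f' := fun z => t ^ 2 * w z - 2 * t * φ' z + 1 / w z * φ' z ^ 2)
      (((hW.const_mul _).sub (hφ.const_mul _)).add hG) (fun z hz =>
        ((((hW' z hz).const_mul _).sub ((hφ' z hz).const_mul _)).add (hG' z hz)).hasDerivWithinAt)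
      fun z hz => ?_
    have hwz := hw z hz
    calc 0 ≤ 1 / w z * (t * w z - φ' z) ^ 2 := by positivity
      _ = t ^ 2 * w z - 2 * t * φ' z + 1 / w z * φ' z ^ 2 := by field_simp; ring
  have hdiscrim := discrim_le_zero (a := W y - W x) (b := -2 * (φ y - φ x)) (c := G y - G x)
    fun t => by linarith [hmono t hx hy hxy]
  rw [discrim] at hdiscrim
  linarith

lemma exists_integral_sub_mul_eq_zero {μ : Measure ℝ} (hG : ContinuousOn G (uIcc a b))
    (hf : IntervalIntegrable f μ a b) (hf₀ : ∀ x ∈ uIoc a b, 0 ≤ f x) :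
    ∃ c ∈ uIcc a b, ∫ x in a..b, (G x - G c) * f x ∂μ = 0 := by
  obtain ⟨c, hc, hGf⟩ := exists_eq_const_mul_intervalIntegral_of_nonneg hG hf hf₀
  refine ⟨c, hc, ?_⟩
  simp only [sub_mul]
  rw [intervalIntegral.integral_sub (hf.continuousOn_mul hG) (hf.const_mul _),
    intervalIntegral.integral_const_mul, hGf, sub_self]

-- Integration by parts against `f' = -W f`; monotonicity of `G` gives the boundary term its sign.
lemma integral_mul_sub_mul_le (hab : a ≤ b) (hW : ContinuousOn W (Icc a b))
    (hf : ContinuousOn f (Icc a b)) (hf₀ : ∀ x ∈ Icc a b, 0 ≤ f x)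
    (hf' : ∀ x ∈ Ioo a b, HasDerivAt f (-W x * f x) x) (hG : ContinuousOn G (Icc a b))
    (hG' : ∀ x ∈ Ioo a b, HasDerivAt G (G' x) x) (hG_mono : MonotoneOn G (Icc a b))
    (hG'_int : IntervalIntegrable G' volume a b) {c : ℝ} (hc : c ∈ Icc a b) :
    ∫ x in a..b, W x * ((G x - G c) * f x) ≤ ∫ x in a..b, G' x * f x := by
  have ha : 0 ≤ (G c - G a) * f a := mul_nonneg
    (sub_nonneg.2 (hG_mono (left_mem_Icc.2 hab) hc hc.1)) (hf₀ a (left_mem_Icc.2 hab))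
  have hb : 0 ≤ (G b - G c) * f b := mul_nonneg
    (sub_nonneg.2 (hG_mono hc (right_mem_Icc.2 hab) hc.2)) (hf₀ b (right_mem_Icc.2 hab))
  rw [← uIcc_of_le hab] at hW hf hG
  have hparts : ∫ x in a..b, (G x - G c) * (-W x * f x) =
      (G b - G c) * f b - (G a - G c) * f a - ∫ x in a..b, G' x * f x := by
    refine intervalIntegral.integral_mul_deriv_eq_deriv_mul_of_hasDerivAt
      (hG.sub continuousOn_const) hf ?_ ?_ hG'_int (hW.neg.mul hf).intervalIntegrable <;>
      rw [min_eq_left hab, max_eq_right hab]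
    · exact fun x hx => (hG' x hx).sub_const _
    · exact hf'
  calc ∫ x in a..b, W x * ((G x - G c) * f x)
      = ∫ x in a..b, -((G x - G c) * (-W x * f x)) := by
        congr 1 with x
        ring
    _ = (∫ x in a..b, G' x * f x) - ((G c - G a) * f a + (G b - G c) * f b) := by
        rw [intervalIntegral.integral_neg, hparts]
        ring
    _ ≤ ∫ x in a..b, G' x * f x := by linarith

lemma exists_monotoneOn_hasDerivAt {q : ℝ → ℝ} (hab : a ≤ b) (hq : ContinuousOn q (Icc a b))
    (hq₀ : ∀ x ∈ Ioo a b, 0 ≤ q x) :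
    ∃ G : ℝ → ℝ, ContinuousOn G (Icc a b) ∧ MonotoneOn G (Icc a b) ∧
      ∀ x ∈ Ioo a b, HasDerivAt G (q x) x := by
  have hq_int : IntervalIntegrable q volume a b := hq.intervalIntegrable_of_Icc hab
  have hcont : ContinuousOn (fun x => ∫ t in a..x, q t) (Icc a b) := by
    simpa only [uIcc_of_le hab] using
      intervalIntegral.continuousOn_primitive_interval' hq_int left_mem_uIcc
  have hderiv : ∀ x ∈ Ioo a b, HasDerivAt (fun x => ∫ t in a..x, q t) (q x) x := fun x hx =>
    intervalIntegral.integral_hasDerivAt_right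
      (hq_int.mono_set (uIcc_subset_uIcc_left (Icc_subset_uIcc (Ioo_subset_Icc_self hx))))
      ((hq.mono Ioo_subset_Icc_self).stronglyMeasurableAtFilter isOpen_Ioo x hx)
      (hq.continuousAt (Icc_mem_nhds hx.1 hx.2))
  refine ⟨_, hcont, ?_, hderiv⟩
  rw [← interior_Icc] at hderiv hq₀
  exact monotoneOn_of_hasDerivWithinAt_nonneg (convex_Icc a b) hcont
    (fun x hx => (hderiv x hx).hasDerivWithinAt) hq₀

theorem exists_integral_sub_const_sq_mul_le (hab : a ≤ b) (hφ : ContinuousOn φ (Icc a b))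
    (hφ' : ∀ x ∈ Ioo a b, HasDerivAt φ (φ' x) x) (hφ'_cont : ContinuousOn φ' (Icc a b))
    (hW : ContinuousOn W (Icc a b)) (hW' : ∀ x ∈ Ioo a b, HasDerivAt W (w x) x)
    (hw : ContinuousOn w (Icc a b)) (hw_pos : ∀ x ∈ Icc a b, 0 < w x)
    (hf : ContinuousOn f (Icc a b)) (hf₀ : ∀ x ∈ Icc a b, 0 ≤ f x)
    (hf' : ∀ x ∈ Ioo a b, HasDerivAt f (-W x * f x) x) :
    ∃ k, ∫ x in a..b, (φ x - k) ^ 2 * f x ≤ ∫ x in a..b, 1 / w x * φ' x ^ 2 * f x := by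
  have hq : ContinuousOn (fun x => 1 / w x * φ' x ^ 2) (Icc a b) :=
    (continuousOn_const.div hw fun x hx => (hw_pos x hx).ne').mul (hφ'_cont.pow 2)
  obtain ⟨G, hG, hG_mono, hG'⟩ := exists_monotoneOn_hasDerivAt hab hq fun x hx =>
    mul_nonneg (one_div_pos.2 (hw_pos x (Ioo_subset_Icc_self hx))).le (sq_nonneg _)
  obtain ⟨c, hc, hcenter⟩ := exists_integral_sub_mul_eq_zero (uIcc_of_le hab ▸ hG)
    (hf.intervalIntegrable_of_Icc (μ := volume) hab)
    fun x hx => hf₀ x (uIcc_of_le hab ▸ uIoc_subset_uIcc hx)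
  rw [uIcc_of_le hab] at hc
  have hGf : ContinuousOn (fun x => (G x - G c) * f x) (Icc a b) :=
    (hG.sub continuousOn_const).mul hf
  have hWGf : ContinuousOn (fun x => W x * ((G x - G c) * f x)) (Icc a b) := hW.mul hGf
  have hcauchy_schwarz : ∀ x ∈ Icc a b,
      (φ x - φ c) ^ 2 * f x ≤ (W x - W c) * ((G x - G c) * f x) := fun x hx => by
    rw [← interior_Icc] at hφ' hW' hG'
    rw [← mul_assoc]
    exact mul_le_mul_of_nonneg_right (sq_sub_le_mul_sub_of_hasDerivAt (convex_Icc a b) hφ hφ' hW hW'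
      (fun z hz => hw_pos z (interior_subset hz)) hG hG' hc hx) (hf₀ x hx)
  refine ⟨φ c, ?_⟩
  calc ∫ x in a..b, (φ x - φ c) ^ 2 * f x
      ≤ ∫ x in a..b, (W x - W c) * ((G x - G c) * f x) :=
        intervalIntegral.integral_mono_on hab
          (((hφ.sub continuousOn_const).pow 2).mul hf |>.intervalIntegrable_of_Icc hab)
          ((hW.sub continuousOn_const).mul hGf |>.intervalIntegrable_of_Icc hab) hcauchy_schwarz
    _ = ∫ x in a..b, W x * ((G x - G c) * f x) := by
        simp only [sub_mul (W _)]
        rw [intervalIntegral.integral_sub (hWGf.intervalIntegrable_of_Icc hab)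
          ((hGf.intervalIntegrable_of_Icc hab).const_mul _), intervalIntegral.integral_const_mul,
          hcenter, mul_zero, sub_zero]
    _ ≤ ∫ x in a..b, 1 / w x * φ' x ^ 2 * f x :=
        integral_mul_sub_mul_le hab hW hf hf₀ hf' hG hG' hG_mono
          (hq.intervalIntegrable_of_Icc hab) hc

end Interval

lemma aecover_restrict_Icc {α : Type*} [LinearOrder α] [TopologicalSpace α] [OrderClosedTopology α]
    [MeasurableSpace α] [OpensMeasurableSpace α] {μ : Measure α} {I : Set α}
    (hI : MeasurableSet I) :
    AECover (μ.restrict I) (atBot ×ˢ atTop) fun p : I × I => Icc (p.1 : α) p.2 :=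
  aecover_restrict_of_ae_imp hI
    (ae_of_all _ fun x hx => by
      filter_upwards [prod_mem_prod (eventually_le_atBot (⟨x, hx⟩ : I))
        (eventually_ge_atTop (⟨x, hx⟩ : I))] with p hp using hp)
    fun _ => measurableSet_Icc

lemma eventually_Icc_subset_Icc {α : Type*} [Preorder α] {I : Set α} (p : I × I) :
    ∀ᶠ q : I × I in atBot ×ˢ atTop, Icc (p.1 : α) p.2 ⊆ Icc (q.1 : α) q.2 := by
  filter_upwards [prod_mem_prod (Iic_mem_atBot p.1) (Ici_mem_atTop p.2)] with q hq
  exact Icc_subset_Icc hq.1 hq.2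

section LogConcave

variable {I : Set ℝ} {V φ : ℝ → ℝ} {C : ℝ}

lemma hasDerivAt_const_mul_exp_neg {v x : ℝ} (hV : HasDerivAt V v x) :
    HasDerivAt (fun y => C * Real.exp (-V y)) (-v * (C * Real.exp (-V x))) x :=
  (hV.fun_neg.exp.const_mul C).congr_deriv (by ring)

lemma exists_setIntegral_Icc_sub_const_sq_mul_exp_neg_le (hIo : IsOpen I) (hI : I.OrdConnected)
    (hC : 0 ≤ C) (hV : ContDiffOn ℝ 2 V I) (hVconvex : ∀ x ∈ I, 0 < deriv (deriv V) x)
    (hφ : ContDiffOn ℝ 1 φ I)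
    (hrhs : IntegrableOn
      (fun x => (1 / deriv (deriv V) x) * (deriv φ x) ^ 2 * (C * Real.exp (-V x))) I)
    {a b : ℝ} (ha : a ∈ I) (hb : b ∈ I) (hab : a ≤ b) :
    ∃ k, ∫ x in Icc a b, (φ x - k) ^ 2 * (C * Real.exp (-V x)) ≤
      ∫ x in I, (1 / deriv (deriv V) x) * (deriv φ x) ^ 2 * (C * Real.exp (-V x)) := by
  have hsub : Icc a b ⊆ I := hI.out ha hb
  have hV' : ContDiffOn ℝ 1 (deriv V) I := hV.deriv_of_isOpen hIo (by norm_num)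
  have hderiv {u : ℝ → ℝ} (hu : ContDiffOn ℝ 1 u I) : ∀ x ∈ Ioo a b, HasDerivAt u (deriv u x) x :=
    fun x hx => ((hu.differentiableOn one_ne_zero).differentiableAt
      (hIo.mem_nhds (hsub (Ioo_subset_Icc_self hx)))).hasDerivAt
  have hcont_deriv {u : ℝ → ℝ} (hu : ContDiffOn ℝ 1 u I) : ContinuousOn (deriv u) (Icc a b) :=
    (hu.continuousOn_deriv_of_isOpen hIo le_rfl).mono hsub
  obtain ⟨k, hk⟩ := exists_integral_sub_const_sq_mul_le hab (hφ.continuousOn.mono hsub) (hderiv hφ)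
    (hcont_deriv hφ) (hV'.continuousOn.mono hsub) (hderiv hV') (hcont_deriv hV')
    (fun x hx => hVconvex x (hsub hx)) (f := fun x => C * Real.exp (-V x))
    (continuousOn_const.mul (hV.continuousOn.mono hsub).neg.rexp)
    (fun x _ => mul_nonneg hC (Real.exp_nonneg _))
    fun x hx => hasDerivAt_const_mul_exp_neg (hderiv (hV.of_le one_le_two) x hx)
  rw [intervalIntegral.integral_of_le hab, intervalIntegral.integral_of_le hab,
    ← integral_Icc_eq_integral_Ioc, ← integral_Icc_eq_integral_Ioc] at hk
  refine ⟨k, hk.trans (setIntegral_mono_set hrhs ?_ hsub.eventuallyLE)⟩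
  filter_upwards [ae_restrict_mem hIo.measurableSet] with x hx
  have hVx := hVconvex x hx
  exact mul_nonneg (by positivity) (mul_nonneg hC (Real.exp_nonneg _))

end LogConcave

theorem brascamp_lieb_one_dimensional_general {I : Set ℝ} (hIo : IsOpen I) (hI : I.OrdConnected)
    {V φ : ℝ → ℝ} {C : ℝ} (hC : 0 < C) (hV : ContDiffOn ℝ 2 V I)
    (hVconvex : ∀ x ∈ I, 0 < deriv (deriv V) x)
    (hprob : ∫ x in I, C * Real.exp (-V x) = 1) (hφ : ContDiffOn ℝ 1 φ I)
    (hrhs : IntegrableOn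
      (fun x => (1 / deriv (deriv V) x) * (deriv φ x) ^ 2 * (C * Real.exp (-V x))) I) :
    IntegrableOn (fun x => φ x ^ 2 * (C * Real.exp (-V x))) I ∧
      (∫ x in I, φ x ^ 2 * (C * Real.exp (-V x)))
          - (∫ x in I, φ x * (C * Real.exp (-V x))) ^ 2
        ≤ ∫ x in I, (1 / deriv (deriv V) x) * (deriv φ x) ^ 2 * (C * Real.exp (-V x)) := by
  set f : ℝ → ℝ := fun x => C * Real.exp (-V x)
  set R := ∫ x in I, (1 / deriv (deriv V) x) * (deriv φ x) ^ 2 * f x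
  have hf₀ : 0 ≤ f := fun x => mul_nonneg hC.le (Real.exp_nonneg _)
  have hf_int : IntegrableOn f I := .of_integral_ne_zero (hprob.trans_ne one_ne_zero)
  have hφ_meas : AEStronglyMeasurable φ (volume.restrict I) :=
    hφ.continuousOn.aestronglyMeasurable hIo.measurableSet
  have hcover := aecover_restrict_Icc (μ := volume) hIo.measurableSet
  have : Nonempty I := nonempty_coe_sort.2 <| nonempty_iff_ne_empty.2 <| by
    rintro rfl
    simp at hprob
  let x₀ : I := Classical.arbitrary I
  have hsub (p : I × I) : Icc (p.1 : ℝ) p.2 ⊆ I := hI.out p.1.2 p.2.2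
  have hR : ∀ᶠ p : I × I in atBot ×ˢ atTop,
      ∃ k, ∫ x in Icc (p.1 : ℝ) p.2, (φ x - k) ^ 2 * f x ∂volume.restrict I ≤ R := by
    filter_upwards [eventually_Icc_subset_Icc (x₀, x₀)] with p hp
    rw [Measure.restrict_restrict_of_subset (hsub p)]
    exact exists_setIntegral_Icc_sub_const_sq_mul_exp_neg_le hIo hI hC.le hV hVconvex hφ hrhs
      p.1.2 p.2.2 (nonempty_Icc.1 ⟨x₀, hp ⟨le_rfl, le_rfl⟩⟩)
  have hφ₂ : IntegrableOn (fun x => φ x ^ 2 * f x) I := by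
    refine integrable_sq_mul_of_aecover hcover eventually_Icc_subset_Icc hf₀ hf_int
      (hprob ▸ one_pos) hφ_meas (fun p => ?_) hR
    rw [IntegrableOn, Measure.restrict_restrict_of_subset (hsub p)]
    exact (((hφ.continuousOn.pow 2).mul (continuousOn_const.mul hV.continuousOn.neg.rexp)).mono
      (hsub p)).integrableOn_compact isCompact_Icc
  have hvar := integral_mul_integral_sq_sub_sq_le_of_aecover hcover hf₀ hf_int hφ_meas hφ₂ hR
  rw [hprob, one_mul, one_mul] at hvar
  exact ⟨hφ₂, hvar⟩

/-- **One-dimensional Brascamp–Lieb inequality** (Remark after Theorem 2.1).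
Let `V` be a smooth strictly convex function (`V'' > 0`) on an open interval
`I = (ia, ib) ⊆ ℝ` (possibly with infinite endpoints), and suppose
`finf(x) = C exp(−V(x))` is a probability density on `I` for some `C > 0`.
Assume the boundary conditions `lim_{x→ia} V'(x) < 0` and `lim_{x→ib} V'(x) > 0`;
since `V'` is strictly increasing, these are equivalent to `V'` taking a negative
and a positive value on `I`. Then for every random variable `X` with density `finf`
and every smooth `φ` with `φ(X)` of finite variance,
`Var[φ(X)] ≤ ∫_I (1/V''(x)) (φ'(x))² finf(x) dx`
(whenever the right-hand side is finite). -/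
theorem brascamp_lieb_one_dimensional
    (ia ib : EReal) (hii : ia < ib)
    (I : Set ℝ) (hI : I = {x : ℝ | ia < (x : EReal) ∧ (x : EReal) < ib})
    (V φ : ℝ → ℝ) (C : ℝ) (hC : 0 < C)
    (hVsmooth : ContDiffOn ℝ (⊤ : ℕ∞) V I)
    (hVconvex : ∀ x ∈ I, 0 < deriv (deriv V) x)
    (hleft : ∃ x ∈ I, deriv V x < 0)
    (hright : ∃ x ∈ I, 0 < deriv V x)
    (hprob : ∫ x in I, C * Real.exp (-V x) = 1)
    (hφsmooth : ContDiffOn ℝ (⊤ : ℕ∞) φ I)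
    (hvar : IntegrableOn (fun x => φ x ^ 2 * (C * Real.exp (-V x))) I)
    (hrhs : IntegrableOn
      (fun x => (1 / deriv (deriv V) x) * (deriv φ x) ^ 2 * (C * Real.exp (-V x))) I) :
    (∫ x in I, φ x ^ 2 * (C * Real.exp (-V x)))
        - (∫ x in I, φ x * (C * Real.exp (-V x))) ^ 2
      ≤ ∫ x in I, (1 / deriv (deriv V) x) * (deriv φ x) ^ 2 * (C * Real.exp (-V x)) := by
  subst hI
  exact (brascamp_lieb_one_dimensional_general (isOpen_Ioo.preimage continuous_coe_real_ereal)
    (ordConnected_Ioo.preimage_mono EReal.coe_strictMono.monotone) hC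
    (hVsmooth.of_le ENat.LEInfty.out) hVconvex hprob (hφsmooth.of_le ENat.LEInfty.out) hrhs).2
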